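/- arXiv:2605.01039 — 2 statements merged into one kernel-verified Lean document; each statement's English description precedes it below -/
import Mathlib

section
/- Let (ΔM_r)_{r≥1} be a martingale-difference sequence that is conditionally sub-Gaussian with parameter v > 0, and let M_s := Σ_{r=1}^s ΔM_r. Then for every integer t ≥ 3, P( ∃ s ∈ {1, …, t} : |M_s| ≥ √(10 · v · s · log(e + t)) ) ≤ 2 / t⁴. -/
open MeasureTheory Filter
open scoped ENNReal

lemma aux_exp_mul {Ω : Type*} {m0 : MeasurableSpace Ω} (μ : Measure Ω) (X Y : Ω → ℝ)
    (hX : ∀ l : ℝ, Integrable (fun ω => Real.exp (l * X ω)) μ)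
    (hY : ∀ l : ℝ, Integrable (fun ω => Real.exp (l * Y ω)) μ) (l : ℝ) :
    Integrable (fun ω => Real.exp (l * X ω) * Real.exp (l * Y ω)) μ := by
  refine ((hX (2 * l)).add (hY (2 * l))).mono
    ((hX l).aestronglyMeasurable.mul (hY l).aestronglyMeasurable) (ae_of_all _ fun ω => ?_)
  have h1 : Real.exp (2 * l * X ω) = Real.exp (l * X ω) ^ 2 := by
    rw [← Real.exp_nat_mul]; congr 1; push_cast; ring
  have h2 : Real.exp (2 * l * Y ω) = Real.exp (l * Y ω) ^ 2 := by
    rw [← Real.exp_nat_mul]; congr 1; push_cast; ring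
  simp only [Pi.add_apply]
  rw [Real.norm_of_nonneg (by positivity), Real.norm_of_nonneg (by positivity), h1, h2]
  nlinarith [sq_nonneg (Real.exp (l * X ω) - Real.exp (l * Y ω)),
    sq_nonneg (Real.exp (l * X ω)), sq_nonneg (Real.exp (l * Y ω))]

lemma aux_step {Ω : Type*} {m m0 : MeasurableSpace Ω} (hm : m ≤ m0)
    (μ : Measure Ω) [IsProbabilityMeasure μ] (X Y : Ω → ℝ) (c l : ℝ)
    (hXm : StronglyMeasurable[m] X)
    (hX : ∀ l : ℝ, Integrable (fun ω => Real.exp (l * X ω)) μ)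
    (hY : ∀ l : ℝ, Integrable (fun ω => Real.exp (l * Y ω)) μ)
    (hc : μ[fun ω => Real.exp (l * Y ω) | m] ≤ᵐ[μ] fun _ => c) :
    ∫ ω, Real.exp (l * X ω) * Real.exp (l * Y ω) ∂μ ≤ c * ∫ ω, Real.exp (l * X ω) ∂μ := by
  have hint := aux_exp_mul μ X Y hX hY l
  have hsm : StronglyMeasurable[m] (fun ω => Real.exp (l * X ω)) :=
    Real.continuous_exp.comp_stronglyMeasurable (hXm.const_mul l)
  have key := condExp_mul_of_stronglyMeasurable_left (μ := μ) (m := m) hsm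
    (g := fun ω => Real.exp (l * Y ω)) hint (hY l)
  rw [← integral_condExp hm, ← integral_const_mul]
  refine integral_mono_ae integrable_condExp ((hX l).const_mul c) ?_
  filter_upwards [key, hc] with ω h1 h2
  have h3 : (μ[fun ω => Real.exp (l * X ω) * Real.exp (l * Y ω)|m]) ω
    = Real.exp (l * X ω) * (μ[fun ω => Real.exp (l * Y ω)|m]) ω := h1
  rw [h3, mul_comm c]
  exact mul_le_mul_of_nonneg_left h2 (Real.exp_pos _).le

/-- Maximal concentration event for sums of conditionally sub-Gaussian
martingale differences: for every `t ≥ 3`, the probability that some partial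
sum `M_s`, `1 ≤ s ≤ t`, exceeds `√(10 v s log(e + t))` in absolute value is at
most `2 / t⁴`. -/
theorem subGaussian_mds_maximal_bound {Ω : Type*} {m0 : MeasurableSpace Ω}
    (μ : Measure Ω) [IsProbabilityMeasure μ]
    (ℱ : Filtration ℕ m0) (ΔM : ℕ → Ω → ℝ) (v : ℝ) (hv : 0 < v)
    (hint : ∀ r, 1 ≤ r → Integrable (ΔM r) μ)
    (hadp : ∀ r, 1 ≤ r → StronglyMeasurable[ℱ r] (ΔM r))
    (hmds : ∀ r, 1 ≤ r → μ[ΔM r | ℱ (r - 1)] =ᵐ[μ] 0)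
    (hexpint : ∀ r, 1 ≤ r → ∀ l : ℝ,
      Integrable (fun ω => Real.exp (l * ΔM r ω)) μ)
    (hsubg : ∀ r, 1 ≤ r → ∀ l : ℝ,
      μ[fun ω => Real.exp (l * ΔM r ω) | ℱ (r - 1)]
        ≤ᵐ[μ] fun _ => Real.exp (l ^ 2 * v / 2))
    (M : ℕ → Ω → ℝ)
    (hM : ∀ s ω, M s ω = ∑ r ∈ Finset.Icc 1 s, ΔM r ω) :
    ∀ t : ℕ, 3 ≤ t →
      μ {ω | ∃ s ∈ Finset.Icc 1 t,
          Real.sqrt (10 * v * s * Real.log (Real.exp 1 + t)) ≤ |M s ω|}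
        ≤ ENNReal.ofReal (2 / (t : ℝ) ^ 4) := by
  have hM0 : ∀ ω, M 0 ω = 0 := fun ω => by simp [hM]
  have hMs : ∀ s ω, M (s + 1) ω = M s ω + ΔM (s + 1) ω := fun s ω => by
    rw [hM, hM, Finset.sum_Icc_succ_top (by omega)]
  have hexp : ∀ s l ω, Real.exp (l * M (s + 1) ω)
      = Real.exp (l * M s ω) * Real.exp (l * ΔM (s + 1) ω) := fun s l ω => by
    rw [hMs, mul_add, Real.exp_add]
  have hmeas : ∀ s, StronglyMeasurable[ℱ s] (M s) := by
    intro s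
    induction s with
    | zero =>
      have : M 0 = fun _ => 0 := funext hM0
      rw [this]; exact stronglyMeasurable_const
    | succ s ih =>
      have : M (s + 1) = M s + ΔM (s + 1) := funext (hMs s)
      rw [this]
      exact (ih.mono (ℱ.mono (Nat.le_succ s))).add (hadp _ (by omega))
  have hI : ∀ s, ∀ l : ℝ, Integrable (fun ω => Real.exp (l * M s ω)) μ := by
    intro s
    induction s with
    | zero => intro l; simp [hM0]
    | succ s ih =>
      intro l
      simp only [hexp]
      exact aux_exp_mul μ _ _ ih (hexpint _ (by omega)) l
  have hB : ∀ s : ℕ, ∀ l : ℝ, ∫ ω, Real.exp (l * M s ω) ∂μ ≤ Real.exp (v * s * l ^ 2 / 2) := by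
    intro s l
    induction s with
    | zero => simp [hM0]
    | succ s ih =>
      simp only [hexp]
      refine (aux_step (ℱ.le s) μ _ _ _ l (hmeas s) (hI s) (hexpint _ (by omega))
        (hsubg (s + 1) (by omega) l)).trans ?_
      refine (mul_le_mul_of_nonneg_left ih (Real.exp_pos _).le).trans_eq ?_
      rw [← Real.exp_add]; congr 1; push_cast; ring
  have hS : ∀ s : ℕ, ProbabilityTheory.HasSubgaussianMGF (M s) (⟨v * s, by positivity⟩ : NNReal) μ :=
    fun s => ⟨hI s, fun l => hB s l⟩
  intro t ht
  have ht0 : (0 : ℝ) < t := by exact_mod_cast (by omega : 0 < t)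
  set L := Real.log (Real.exp 1 + t) with hL
  have hpos : 0 < Real.exp 1 + (t : ℝ) := by positivity
  have hL0 : 0 ≤ L := Real.log_nonneg (by linarith [Real.add_one_le_exp (1 : ℝ)])
  have hone : ∀ s ∈ Finset.Icc 1 t,
      μ.real {ω | Real.sqrt (10 * v * s * L) ≤ |M s ω|} ≤ 2 / (Real.exp 1 + t) ^ 5 := by
    intro s hs
    have hs1 : (0 : ℝ) < s := by exact_mod_cast (Finset.mem_Icc.1 hs).1
    have hval : Real.exp (-(Real.sqrt (10 * v * s * L)) ^ 2 / (2 * (v * s)))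
        = 1 / (Real.exp 1 + t) ^ 5 := by
      rw [Real.sq_sqrt (by positivity)]
      have : -(10 * v * s * L) / (2 * (v * s)) = -((5 : ℕ) * L) := by
        push_cast; field_simp; ring
      rw [this, Real.exp_neg, Real.exp_nat_mul, hL, Real.exp_log hpos, one_div]
    have h1 := (hS s).measure_ge_le (Real.sqrt_nonneg (10 * v * s * L))
    have h2 := (hS s).neg.measure_ge_le (Real.sqrt_nonneg (10 * v * s * L))
    change _ ≤ Real.exp (-(Real.sqrt (10 * v * s * L)) ^ 2 / (2 * (v * s))) at h1
    change _ ≤ Real.exp (-(Real.sqrt (10 * v * s * L)) ^ 2 / (2 * (v * s))) at h2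
    rw [hval] at h1 h2
    have hsub : {ω | Real.sqrt (10 * v * s * L) ≤ |M s ω|} ⊆
        {ω | Real.sqrt (10 * v * s * L) ≤ M s ω} ∪
        {ω | Real.sqrt (10 * v * s * L) ≤ (-M s) ω} := by
      intro ω h
      simp only [Set.mem_union, Set.mem_setOf_eq, Pi.neg_apply] at h ⊢
      exact le_abs.1 h
    calc _ ≤ _ := measureReal_mono hsub
      _ ≤ _ := measureReal_union_le _ _
      _ ≤ _ := add_le_add h1 h2
      _ = _ := by ring
  have hset : {ω | ∃ s ∈ Finset.Icc 1 t, Real.sqrt (10 * v * s * L) ≤ |M s ω|}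
      = ⋃ s ∈ Finset.Icc 1 t, {ω | Real.sqrt (10 * v * s * L) ≤ |M s ω|} := by
    ext ω; simp
  rw [hset, ← ENNReal.ofReal_toReal (measure_ne_top μ _)]
  apply ENNReal.ofReal_le_ofReal
  change μ.real _ ≤ _
  refine (measureReal_biUnion_finset_le _ _).trans ((Finset.sum_le_sum hone).trans ?_)
  simp only [Finset.sum_const, Nat.card_Icc, Nat.add_sub_cancel, nsmul_eq_mul]
  have hp : (t : ℝ) ^ 5 ≤ (Real.exp 1 + t) ^ 5 := by
    gcongr; linarith [Real.exp_pos 1]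
  calc (t : ℝ) * (2 / (Real.exp 1 + t) ^ 5) ≤ t * (2 / (t : ℝ) ^ 5) := by gcongr
    _ = 2 / (t : ℝ) ^ 4 := by field_simp
end

section
/- Let μ be a σ-finite measure on a measurable space 𝓞 and let p, q be probability densities with respect to μ that are strictly positive μ-almost everywhere. Let X₁, …, X_t be i.i.d. random variables with density p with respect to μ, and define the log-likelihood ratio Z_t := Σ_{i=1}^t log(p(X_i)/q(X_i)) and the Bhattacharyya coefficient ρ := ∫ √(p·q) dμ. Then E[exp(−Z_t/2)] = ρ^t, and consequently P(Z_t ≤ 0) ≤ ρ^t. -/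
open MeasureTheory
open scoped ENNReal

/-- For i.i.d. observations with density `p`, the log-likelihood ratio
`Z_t = ∑ log(p(X_i)/q(X_i))` satisfies `E[exp(-Z_t/2)] = ρ^t`, where `ρ` is the
Bhattacharyya coefficient, and hence `P(Z_t ≤ 0) ≤ ρ^t`. -/
theorem llr_hellinger_bound {O : Type*} [MeasurableSpace O]
    (μ : Measure O) [SigmaFinite μ]
    (p q : O → ℝ) (hp : Measurable p) (hq : Measurable q)
    (hppos : ∀ᵐ x ∂μ, 0 < p x) (hqpos : ∀ᵐ x ∂μ, 0 < q x)
    (hpi : Integrable p μ) (hqi : Integrable q μ)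
    (hp1 : ∫ x, p x ∂μ = 1) (hq1 : ∫ x, q x ∂μ = 1)
    (t : ℕ) (ht : 1 ≤ t)
    (ρ : ℝ) (hρ : ρ = ∫ x, Real.sqrt (p x * q x) ∂μ)
    (P : Measure O) (hP : P = μ.withDensity fun x => ENNReal.ofReal (p x))
    (Z : (Fin t → O) → ℝ)
    (hZ : ∀ ω, Z ω = ∑ i, Real.log (p (ω i) / q (ω i))) :
    (∫ ω, Real.exp (-Z ω / 2) ∂Measure.pi (fun _ : Fin t => P)) = ρ ^ t ∧
    Measure.pi (fun _ : Fin t => P) {ω | Z ω ≤ 0} ≤ ENNReal.ofReal (ρ ^ t) := by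
  have hPprob : IsProbabilityMeasure P := by
    constructor
    rw [hP, withDensity_apply _ MeasurableSet.univ, Measure.restrict_univ,
      ← ofReal_integral_eq_lintegral_ofReal hpi (hppos.mono fun x hx => hx.le), hp1,
      ENNReal.ofReal_one]
  have key : ∀ᵐ x ∂μ, (ENNReal.ofReal (p x)).toReal •
      Real.exp (-Real.log (p x / q x) / 2) = Real.sqrt (p x * q x) := by
    filter_upwards [hppos, hqpos] with x hx hy
    rw [ENNReal.toReal_ofReal hx.le, smul_eq_mul]
    symm
    rw [Real.sqrt_eq_iff_mul_self_eq (by positivity) (by positivity)]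
    have h2 : Real.exp (-Real.log (p x / q x) / 2) * Real.exp (-Real.log (p x / q x) / 2)
        = q x / p x := by
      rw [← Real.exp_add, add_halves, Real.exp_neg, Real.exp_log (by positivity), inv_div]
    symm
    calc _ = p x * p x * (Real.exp (-Real.log (p x / q x) / 2) *
          Real.exp (-Real.log (p x / q x) / 2)) := by ring
      _ = _ := by rw [h2]; field_simp
  have hsqrt : Integrable (fun x => Real.sqrt (p x * q x)) μ := by
    refine (hpi.add hqi).mono' (hp.mul hq).sqrt.aestronglyMeasurable ?_
    filter_upwards [hppos, hqpos] with x hx hy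
    rw [Real.norm_of_nonneg (Real.sqrt_nonneg _), Pi.add_apply]
    apply Real.sqrt_le_iff.2
    constructor
    · positivity
    · nlinarith [mul_pos hx hy]
  have hint1 : Integrable (fun x => Real.exp (-Real.log (p x / q x) / 2)) P := by
    rw [hP, integrable_withDensity_iff_integrable_smul' hp.ennreal_ofReal
      (Filter.Eventually.of_forall fun _ => ENNReal.ofReal_lt_top)]
    exact hsqrt.congr (key.mono fun _ h => h.symm)
  have hval : ∫ x, Real.exp (-Real.log (p x / q x) / 2) ∂P = ρ := by
    rw [hP, integral_withDensity_eq_integral_toReal_smul hp.ennreal_ofReal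
      (Filter.Eventually.of_forall fun _ => ENNReal.ofReal_lt_top), hρ]
    exact integral_congr_ae key
  have hexp : (fun ω => Real.exp (-Z ω / 2)) =
      fun ω : Fin t → O => ∏ i, Real.exp (-Real.log (p (ω i) / q (ω i)) / 2) := by
    funext ω
    rw [← Real.exp_sum, hZ, ← Finset.sum_div, Finset.sum_neg_distrib]
  have hint : Integrable (fun ω => Real.exp (-Z ω / 2)) (Measure.pi (fun _ : Fin t => P)) := by
    rw [hexp]
    exact Integrable.fintype_prod (f := fun _ : Fin t => fun x =>
      Real.exp (-Real.log (p x / q x) / 2)) (fun _ => hint1)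
  have hE : (∫ ω, Real.exp (-Z ω / 2) ∂Measure.pi (fun _ : Fin t => P)) = ρ ^ t := by
    rw [hexp, integral_fintype_prod_eq_prod (fun _ : Fin t => fun x =>
      Real.exp (-Real.log (p x / q x) / 2))]
    simp [hval]
  refine ⟨hE, ?_⟩
  rw [← hE, ofReal_integral_eq_lintegral_ofReal hint
    (Filter.Eventually.of_forall fun _ => (Real.exp_pos _).le)]
  refine le_trans (measure_mono ?_) ((one_mul _).symm.le.trans
    (mul_meas_ge_le_lintegral₀ hint.aestronglyMeasurable.aemeasurable.ennreal_ofReal 1))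
  intro ω hω
  have hω' : Z ω ≤ 0 := hω
  show (1 : ℝ≥0∞) ≤ ENNReal.ofReal _
  rw [ENNReal.one_le_ofReal, Real.one_le_exp_iff]
  linarith
end
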